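/- Fix integers m ≥ 1, n ≥ 3, and N ≥ 1. Then there exists N'₀ ∈ ℕ such that for every integer N' ≥ N'₀ and every vector p = (p_{i,j}) of positive reals summing to 1, Δ_p(N, N') < 0; that is, for sufficiently large aggregated sample size N', the estimator p̂ (which incorporates the aggregated data) dominates the estimator p̃ under entropy loss. -/

import Mathlib

open Finset

/-- Binomial(N, q) probability mass function at `x`. -/
noncomputable def binPMF (N : ℕ) (q : ℝ) (x : ℕ) : ℝ :=
  (N.choose x : ℝ) * q ^ x * (1 - q) ^ (N - x)

/-- The entropy loss `L(d, p) = ∑ᵢ ∑ⱼ pᵢⱼ log (pᵢⱼ / dᵢⱼ)`. -/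
noncomputable def entropyLoss {m n : ℕ} (d p : Fin (m+1) → Fin (n+1) → ℝ) : ℝ :=
  ∑ i, ∑ j, p i j * Real.log (p i j / d i j)

/-- Support of the Multinomial(N, p) distribution on (1+m)(1+n) cells. -/
def suppX (m n N : ℕ) : Finset (Fin (m+1) → Fin (n+1) → Fin (N+1)) :=
  Finset.univ.filter fun x => ∑ i, ∑ j, (x i j : ℕ) = N

/-- Support of the Multinomial(N', p·) distribution on 1+m cells. -/
def suppY (m N' : ℕ) : Finset (Fin (m+1) → Fin (N'+1)) :=
  Finset.univ.filter fun y => ∑ i, (y i : ℕ) = N'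

/-- Multinomial(N, p) probability of the outcome `x`. -/
noncomputable def wX {m n N : ℕ} (p : Fin (m+1) → Fin (n+1) → ℝ)
    (x : Fin (m+1) → Fin (n+1) → Fin (N+1)) : ℝ :=
  (Nat.multinomial Finset.univ (fun k : Fin (m+1) × Fin (n+1) => (x k.1 k.2 : ℕ)) : ℝ) *
    ∏ i, ∏ j, p i j ^ (x i j : ℕ)

/-- Multinomial(N', (pᵢ.)ᵢ) probability of the outcome `y`, where `pᵢ. = ∑ⱼ pᵢⱼ`. -/
noncomputable def wY {m n N' : ℕ} (p : Fin (m+1) → Fin (n+1) → ℝ)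
    (y : Fin (m+1) → Fin (N'+1)) : ℝ :=
  (Nat.multinomial Finset.univ (fun i => (y i : ℕ)) : ℝ) *
    ∏ i, (∑ j, p i j) ^ (y i : ℕ)

/-- The estimator `p̃` based on the direct observations only. -/
noncomputable def ptilde {m n N : ℕ} (x : Fin (m+1) → Fin (n+1) → Fin (N+1)) :
    Fin (m+1) → Fin (n+1) → ℝ :=
  fun i j => ((x i j : ℝ) + 1/2) / ((N : ℝ) + (1 + m) * (1 + n) / 2)

/-- The estimator `p̂` based on the direct and aggregated observations. -/
noncomputable def phat {m n N N' : ℕ} (x : Fin (m+1) → Fin (n+1) → Fin (N+1))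
    (y : Fin (m+1) → Fin (N'+1)) : Fin (m+1) → Fin (n+1) → ℝ :=
  fun i j =>
    ((((∑ j', (x i j' : ℕ)) : ℕ) : ℝ) + (y i : ℝ) + (1 + n) / 2) /
        ((N : ℝ) + (N' : ℝ) + (1 + m) * (1 + n) / 2) *
      (((x i j : ℝ) + 1/2) / ((((∑ j', (x i j' : ℕ)) : ℕ) : ℝ) + (1 + n) / 2))

/-- The risk difference `Δ_p(N, N') = E_p[L(p̂, p)] − E_p[L(p̃, p)]`, the expectation being
a finite sum over the supports of the independent multinomial observations. -/
noncomputable def riskDiff (m n : ℕ) (p : Fin (m+1) → Fin (n+1) → ℝ) (N N' : ℕ) : ℝ :=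
  ∑ x ∈ suppX m n N, ∑ y ∈ suppY m N',
    wX p x * wY p y * (entropyLoss (phat x y) p - entropyLoss (ptilde x) p)

/-!
The estimators `p̂` and `p̃` have the same conditionals within each row, so their losses differ only
through their row marginals: with `q` the row marginal of `p`, the loss difference is
`KL(q ‖ row marginal of p̂) - KL(q ‖ row marginal of p̃)`.

The row marginal of `p̂` is a smoothed relative frequency of the aggregated sample. Since
`(N' + 1) qᵢ E[1 / (Yᵢ + 1)] ≤ 1`, the inequality `log t ≤ t - 1` bounds its expected divergence by
`O(1 / N')` uniformly in `p`. The expected divergence for `p̃` does not depend on `N'`; it is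
continuous in `p` on the closed simplex, and positive there because `p̃` cannot estimate the row
marginal correctly on every outcome of positive probability. By compactness it is bounded below by
a constant `c > 0`, which wins for large `N'`.
-/

open InformationTheory Real

section RelEntropy

variable {κ : Type*} [Fintype κ] {q r : κ → ℝ}

/-- The relative entropy `∑ q log (q / r)` of two weight vectors on a finite type: the entropy loss
for the row marginals. A term with `r k = 0` contributes `0` instead of `∞`. -/
noncomputable def relEntropy (q r : κ → ℝ) : ℝ :=
  ∑ k, q k * log (q k / r k)

lemma continuous_relEntropy_left (hr : ∀ k, 0 < r k) : Continuous fun q => relEntropy q r := by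
  have rescale (q : κ → ℝ) (k : κ) :
      q k * log (q k / r k) = r k * (q k / r k * log (q k / r k)) := by
    have := (hr k).ne'
    field_simp
  simp only [relEntropy, rescale]
  exact continuous_finsetSum _ fun k _ =>
    continuous_const.mul (continuous_mul_log.comp ((continuous_apply k).div_const _))

lemma relEntropy_eq_sum_mul_klFun (hr : ∀ k, 0 < r k) (hsum : ∑ k, q k = ∑ k, r k) :
    relEntropy q r = ∑ k, r k * klFun (q k / r k) := by
  have expand (k : κ) : r k * klFun (q k / r k) = q k * log (q k / r k) + (r k - q k) := by
    have := (hr k).ne'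
    rw [klFun_apply]
    field_simp
    ring
  simp only [expand, sum_add_distrib, sum_sub_distrib, hsum, sub_self, add_zero, relEntropy]

lemma relEntropy_nonneg (hq : ∀ k, 0 ≤ q k) (hr : ∀ k, 0 < r k) (hsum : ∑ k, q k = ∑ k, r k) :
    0 ≤ relEntropy q r := by
  rw [relEntropy_eq_sum_mul_klFun hr hsum]
  exact sum_nonneg fun k _ => mul_nonneg (hr k).le (klFun_nonneg (div_nonneg (hq k) (hr k).le))

lemma relEntropy_pos (hq : ∀ k, 0 ≤ q k) (hr : ∀ k, 0 < r k) (hsum : ∑ k, q k = ∑ k, r k)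
    (hne : q ≠ r) : 0 < relEntropy q r := by
  have hratio (k : κ) : 0 ≤ q k / r k := div_nonneg (hq k) (hr k).le
  obtain ⟨k, hk⟩ := Function.ne_iff.mp hne
  have hgap : klFun (q k / r k) ≠ 0 := by
    rwa [Ne, klFun_eq_zero_iff (hratio k), div_eq_one_iff_eq (hr k).ne']
  rw [relEntropy_eq_sum_mul_klFun hr hsum]
  exact sum_pos' (fun l _ => mul_nonneg (hr l).le (klFun_nonneg (hratio l)))
    ⟨k, mem_univ k, mul_pos (hr k) ((klFun_nonneg (hratio k)).lt_of_ne' hgap)⟩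

end RelEntropy

section Multinomial

variable {κ : Type*} [Fintype κ] {q : κ → ℝ}

/-- The Multinomial(∑ y, q) probability of the vector of counts `y`, on an arbitrary finite type of
cells. Summing it over `piAntidiag univ N` is summing over the support of Multinomial(N, q). -/
noncomputable def multinomialWeight (q : κ → ℝ) (y : κ → ℕ) : ℝ :=
  (Nat.multinomial univ y : ℝ) * ∏ k, q k ^ y k

lemma multinomialWeight_nonneg (hq : ∀ k, 0 ≤ q k) (y : κ → ℕ) : 0 ≤ multinomialWeight q y :=
  mul_nonneg (Nat.cast_nonneg _) (prod_nonneg fun k _ => pow_nonneg (hq k) _)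

variable [DecidableEq κ]

lemma sum_multinomialWeight (q : κ → ℝ) (N : ℕ) :
    ∑ y ∈ piAntidiag univ N, multinomialWeight q y = (∑ k, q k) ^ N :=
  (sum_pow_eq_sum_piAntidiag univ q N).symm

lemma sum_multinomialWeight_eq_one (hq : q ∈ stdSimplex ℝ κ) (N : ℕ) :
    ∑ y ∈ piAntidiag univ N, multinomialWeight q y = 1 := by
  rw [sum_multinomialWeight, hq.2, one_pow]

lemma succ_mul_multinomial_add_single (y : κ → ℕ) (k : κ) :
    (y k + 1) * Nat.multinomial univ (y + Pi.single k 1) =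
      (∑ l, y l + 1) * Nat.multinomial univ y := by
  have factorial_add_single (l : κ) : (y l + (Pi.single k 1 : κ → ℕ) l).factorial =
      (y l).factorial * if l = k then y k + 1 else 1 := by
    obtain rfl | hl := eq_or_ne l k
    · simp [Nat.factorial_succ, mul_comm]
    · simp [hl]
  have spec_shift := Nat.multinomial_spec univ (y + Pi.single k 1)
  have spec := Nat.multinomial_spec univ y
  simp only [Pi.add_apply, factorial_add_single, prod_mul_distrib, prod_ite_eq', mem_univ,
    if_true, sum_add_distrib, sum_pi_single', Nat.factorial_succ, ← spec] at spec_shift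
  refine Nat.eq_of_mul_eq_mul_left (prod_pos fun l (_ : l ∈ univ) => (y l).factorial_pos) ?_
  linarith

lemma multinomialWeight_mul_inv_succ {N : ℕ} {y : κ → ℕ} (hy : ∑ l, y l = N) (k : κ) :
    multinomialWeight q y * (1 / (y k + 1)) * ((N + 1) * q k) =
      multinomialWeight q (y + Pi.single k 1) := by
  have hcoeff : ((y k : ℝ) + 1) * Nat.multinomial univ (y + Pi.single k 1) =
      (N + 1) * Nat.multinomial univ y := by
    exact_mod_cast hy ▸ succ_mul_multinomial_add_single y k
  have hprod : ∏ l, q l ^ (y + Pi.single k 1 : κ → ℕ) l = (∏ l, q l ^ y l) * q k := by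
    simp only [Pi.add_apply, pow_add, prod_mul_distrib, Pi.single_apply]
    simp [pow_ite]
  rw [multinomialWeight, multinomialWeight, hprod]
  field_simp
  linear_combination -(q k * ∏ l, q l ^ y l) * hcoeff

-- The size-biasing shift `y ↦ y + e_k` embeds the outcomes of size `N` into those of size `N + 1`.
lemma sum_multinomialWeight_mul_inv_succ_le (hq : q ∈ stdSimplex ℝ κ) (N : ℕ) (k : κ) :
    (∑ y ∈ piAntidiag univ N, multinomialWeight q y * (1 / (y k + 1))) * ((N + 1) * q k) ≤ 1 := by
  have shift_mem : ∀ y ∈ piAntidiag univ N,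
      y + Pi.single k 1 ∈ piAntidiag (univ : Finset κ) (N + 1) := by
    intro y hy
    simp_all [mem_piAntidiag, sum_add_distrib]
  calc (∑ y ∈ piAntidiag univ N, multinomialWeight q y * (1 / (y k + 1))) * ((N + 1) * q k)
      = ∑ y ∈ piAntidiag univ N, multinomialWeight q (y + Pi.single k 1) := by
        rw [sum_mul]
        exact sum_congr rfl fun y hy => multinomialWeight_mul_inv_succ (mem_piAntidiag.mp hy).1 k
    _ = ∑ y ∈ (piAntidiag univ N).image (· + Pi.single k 1), multinomialWeight q y :=
        (sum_image (add_left_injective _).injOn).symm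
    _ ≤ ∑ y ∈ piAntidiag univ (N + 1), multinomialWeight q y :=
        sum_le_sum_of_subset_of_nonneg (image_subset_iff.mpr shift_mem)
          fun y _ _ => multinomialWeight_nonneg hq.1 y
    _ = 1 := sum_multinomialWeight_eq_one hq (N + 1)

lemma sum_fin_filter_eq_sum_piAntidiag (N : ℕ) (f : (κ → ℕ) → ℝ) :
    ∑ y : κ → Fin (N + 1) with ∑ k, (y k : ℕ) = N, f (fun k => y k) =
      ∑ y ∈ piAntidiag univ N, f y := by
  refine sum_bij (fun y _ k => (y k : ℕ)) (fun y hy => ?_) (fun y _ z _ h => ?_) (fun y hy => ?_)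
    (fun _ _ => rfl)
  · simpa [mem_piAntidiag] using hy
  · exact funext fun k => Fin.ext (congrFun h k)
  · obtain ⟨hsum, -⟩ := mem_piAntidiag.mp hy
    have hlt (k : κ) : y k < N + 1 :=
      Nat.lt_succ_of_le (hsum ▸ single_le_sum (fun _ _ => Nat.zero_le _) (mem_univ k))
    exact ⟨fun k => ⟨y k, hlt k⟩, by simpa using hsum, rfl⟩

end Multinomial

section SmoothedFrequencies

-- `t / ((y + b) / M)` is the product of `t L / (y + 1)`, `M / L` and `(y + 1) / (y + b)`; each
-- factor is estimated by `log x ≤ x - 1`.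
lemma mul_log_div_smoothed_le {t y b L M : ℝ} (ht : 0 ≤ t) (hy : 0 ≤ y) (hb : 1 / 2 ≤ b)
    (hL : 0 < L) (hM : 0 < M) :
    t * log (t / ((y + b) / M)) ≤ 1 / (y + 1) * (L * t) * (t + 1 / L) + t * (M / L - 2) := by
  obtain rfl | ht := ht.eq_or_lt
  · simp
  have hyb : 0 < y + b := by linarith
  have hfactor : t / ((y + b) / M) = t * L / (y + 1) * (M / L) * ((y + 1) / (y + b)) := by
    field_simp
  have hratio : (y + 1) / (y + b) - 1 ≤ 1 / (y + 1) := by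
    rw [div_sub_one hyb.ne', div_le_div_iff₀ hyb (by positivity)]
    nlinarith
  have hlog : log (t / ((y + b) / M)) ≤ (t * L / (y + 1) - 1) + (M / L - 1) + 1 / (y + 1) := by
    rw [hfactor, log_mul (by positivity) (by positivity), log_mul (by positivity) (by positivity)]
    refine add_le_add (add_le_add ?_ ?_) (le_trans ?_ hratio) <;>
      exact log_le_sub_one_of_pos (by positivity)
  calc t * log (t / ((y + b) / M))
      ≤ t * ((t * L / (y + 1) - 1) + (M / L - 1) + 1 / (y + 1)) :=
        mul_le_mul_of_nonneg_left hlog ht.le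
    _ = 1 / (y + 1) * (L * t) * (t + 1 / L) + t * (M / L - 2) := by
        field_simp
        ring

variable {κ : Type*} [Fintype κ] [DecidableEq κ] {q b : κ → ℝ}

lemma sum_multinomialWeight_mul_log_div_smoothed_le (hq : q ∈ stdSimplex ℝ κ) (N : ℕ) (k : κ)
    {β M : ℝ} (hβ : 1 / 2 ≤ β) (hM : 0 < M) :
    ∑ y ∈ piAntidiag univ N, multinomialWeight q y * (q k * log (q k / ((y k + β) / M))) ≤
      q k * (M / (N + 1) - 1) + 1 / (N + 1) := by
  have hN : (0 : ℝ) < N + 1 := by positivity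
  have hfactor : 0 ≤ q k + 1 / ((N : ℝ) + 1) := add_nonneg (hq.1 k) (by positivity)
  calc ∑ y ∈ piAntidiag univ N, multinomialWeight q y * (q k * log (q k / ((y k + β) / M)))
      ≤ ∑ y ∈ piAntidiag univ N, multinomialWeight q y *
          (1 / (y k + 1) * ((N + 1) * q k) * (q k + 1 / (N + 1)) + q k * (M / (N + 1) - 2)) :=
        sum_le_sum fun y _ => mul_le_mul_of_nonneg_left
          (mul_log_div_smoothed_le (hq.1 k) (Nat.cast_nonneg _) hβ hN hM)
          (multinomialWeight_nonneg hq.1 y)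
    _ = (∑ y ∈ piAntidiag univ N, multinomialWeight q y * (1 / (y k + 1))) * ((N + 1) * q k) *
          (q k + 1 / (N + 1)) + q k * (M / (N + 1) - 2) := by
        simp only [mul_add, sum_add_distrib, ← mul_assoc, ← sum_mul,
          sum_multinomialWeight_eq_one hq, one_mul]
    _ ≤ 1 * (q k + 1 / (N + 1)) + q k * (M / (N + 1) - 2) := by
        gcongr
        exact sum_multinomialWeight_mul_inv_succ_le hq N k
    _ = q k * (M / (N + 1) - 1) + 1 / (N + 1) := by ring

lemma sum_multinomialWeight_mul_relEntropy_smoothed_le (hq : q ∈ stdSimplex ℝ κ) (N : ℕ)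
    (hb : ∀ k, 1 / 2 ≤ b k) :
    ∑ y ∈ piAntidiag univ N,
        multinomialWeight q y * relEntropy q (fun k => (y k + b k) / (N + ∑ l, b l)) ≤
      (∑ k, b k + Fintype.card κ - 1) / (N + 1) := by
  have hκ : (univ : Finset κ).Nonempty := nonempty_of_sum_ne_zero (hq.2.trans_ne one_ne_zero)
  have hM : 0 < N + ∑ k, b k :=
    add_pos_of_nonneg_of_pos N.cast_nonneg (sum_pos (fun k _ => by linarith [hb k]) hκ)
  simp only [relEntropy, mul_sum]
  rw [sum_comm]
  calc ∑ k, ∑ y ∈ piAntidiag univ N,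
        multinomialWeight q y * (q k * log (q k / ((y k + b k) / (N + ∑ l, b l))))
      ≤ ∑ k, (q k * ((N + ∑ l, b l) / (N + 1) - 1) + 1 / (N + 1)) :=
        sum_le_sum fun k _ => sum_multinomialWeight_mul_log_div_smoothed_le hq N k (hb k) hM
    _ = (N + ∑ l, b l) / (N + 1) - 1 + Fintype.card κ / (N + 1) := by
        rw [sum_add_distrib, ← sum_mul, hq.2, sum_const, card_univ, nsmul_eq_mul, one_mul,
          mul_one_div]
    _ = (∑ k, b k + Fintype.card κ - 1) / (N + 1) := by
        field_simp
        ring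

end SmoothedFrequencies

section RowSum

variable {ι κ : Type*} [Fintype κ]

/-- The row marginal `pᵢ. = ∑ⱼ pᵢⱼ` of a two-way table. -/
def rowSum (p : ι → κ → ℝ) (i : ι) : ℝ :=
  ∑ j, p i j

lemma continuous_rowSum : Continuous (rowSum : (ι → κ → ℝ) → ι → ℝ) := by
  unfold rowSum
  fun_prop

lemma rowSum_pos [Nonempty κ] {p : ι → κ → ℝ} (hp : ∀ i j, 0 < p i j) (i : ι) : 0 < rowSum p i :=
  sum_pos (fun j _ => hp i j) univ_nonempty

lemma exists_pos_of_rowSum_pos {p : ι → κ → ℝ} {i : ι} (hi : 0 < rowSum p i) :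
    ∃ j, 0 < p i j := by
  simpa using exists_lt_of_sum_lt (s := univ) (f := 0) (g := p i) (by simpa [rowSum] using hi)

lemma rowSum_mem_stdSimplex [Fintype ι] {p : ι → κ → ℝ}
    (hp : Function.uncurry p ∈ stdSimplex ℝ (ι × κ)) : rowSum p ∈ stdSimplex ℝ ι :=
  ⟨fun i => sum_nonneg fun j _ => hp.1 (i, j), by simpa [rowSum, Fintype.sum_prod_type] using hp.2⟩

end RowSum

section Estimators

variable {m n : ℕ}

-- The loss splits into the loss of the row marginals and that of the conditionals within the rows;
-- the latter agree for `d` and `e`.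
lemma entropyLoss_sub_entropyLoss {d e p : Fin (m + 1) → Fin (n + 1) → ℝ}
    (hd : ∀ i j, 0 < d i j) (he : ∀ i j, 0 < e i j) (hp : ∀ i j, 0 < p i j)
    (hcond : ∀ i j, d i j * rowSum e i = e i j * rowSum d i) :
    entropyLoss d p - entropyLoss e p =
      relEntropy (rowSum p) (rowSum d) - relEntropy (rowSum p) (rowSum e) := by
  simp only [entropyLoss, relEntropy, ← sum_sub_distrib, ← mul_sub]
  refine sum_congr rfl fun i _ => ?_
  rw [rowSum, sum_mul]
  refine sum_congr rfl fun j _ => ?_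
  have hlog := congrArg log (hcond i j)
  rw [log_mul (hd i j).ne' (rowSum_pos he i).ne', log_mul (he i j).ne' (rowSum_pos hd i).ne']
    at hlog
  rw [log_div (hp i j).ne' (hd i j).ne', log_div (hp i j).ne' (he i j).ne', ← rowSum,
    log_div (rowSum_pos hp i).ne' (rowSum_pos hd i).ne',
    log_div (rowSum_pos hp i).ne' (rowSum_pos he i).ne']
  linear_combination -p i j * hlog

variable {N N' : ℕ}

lemma ptilde_pos (x : Fin (m + 1) → Fin (n + 1) → Fin (N + 1)) (i : Fin (m + 1))
    (j : Fin (n + 1)) : 0 < ptilde x i j := by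
  unfold ptilde
  positivity

lemma phat_pos (x : Fin (m + 1) → Fin (n + 1) → Fin (N + 1)) (y : Fin (m + 1) → Fin (N' + 1))
    (i : Fin (m + 1)) (j : Fin (n + 1)) : 0 < phat x y i j := by
  unfold phat
  positivity

lemma sum_natCast_add_half (f : Fin (n + 1) → ℕ) :
    ∑ j, ((f j : ℝ) + 1 / 2) = ((∑ j, f j : ℕ) : ℝ) + (1 + n) / 2 := by
  rw [sum_add_distrib, sum_const, card_univ, Fintype.card_fin, nsmul_eq_mul]
  push_cast
  ring

lemma rowSum_ptilde (x : Fin (m + 1) → Fin (n + 1) → Fin (N + 1)) (i : Fin (m + 1)) :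
    rowSum (ptilde x) i =
      (((∑ j, (x i j : ℕ) : ℕ) : ℝ) + (1 + n) / 2) / (N + (1 + m) * (1 + n) / 2) := by
  simp only [rowSum, ptilde, ← sum_div, sum_natCast_add_half fun j => (x i j : ℕ)]

lemma rowSum_phat (x : Fin (m + 1) → Fin (n + 1) → Fin (N + 1)) (y : Fin (m + 1) → Fin (N' + 1))
    (i : Fin (m + 1)) :
    rowSum (phat x y) i =
      (((∑ j, (x i j : ℕ) : ℕ) : ℝ) + y i + (1 + n) / 2) / (N + N' + (1 + m) * (1 + n) / 2) := by
  simp only [rowSum, phat, ← mul_sum, ← sum_div, sum_natCast_add_half fun j => (x i j : ℕ)]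
  rw [div_self (by positivity), mul_one]

lemma phat_mul_rowSum_ptilde (x : Fin (m + 1) → Fin (n + 1) → Fin (N + 1))
    (y : Fin (m + 1) → Fin (N' + 1)) (i : Fin (m + 1)) (j : Fin (n + 1)) :
    phat x y i j * rowSum (ptilde x) i = ptilde x i j * rowSum (phat x y) i := by
  rw [rowSum_ptilde, rowSum_phat, phat, ptilde]
  field_simp

lemma sum_rowCount_add_of_mem_suppX {x : Fin (m + 1) → Fin (n + 1) → Fin (N + 1)}
    (hx : x ∈ suppX m n N) :
    ∑ i, (((∑ j, (x i j : ℕ) : ℕ) : ℝ) + (1 + n) / 2) = N + (1 + m) * (1 + n) / 2 := by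
  have htotal : ∑ i, ∑ j, (x i j : ℕ) = N := (mem_filter.mp hx).2
  rw [sum_add_distrib, ← Nat.cast_sum, htotal, sum_const, card_univ, Fintype.card_fin,
    nsmul_eq_mul]
  push_cast
  ring

lemma sum_rowSum_ptilde {x : Fin (m + 1) → Fin (n + 1) → Fin (N + 1)} (hx : x ∈ suppX m n N) :
    ∑ i, rowSum (ptilde x) i = 1 := by
  simp only [rowSum_ptilde, ← sum_div, sum_rowCount_add_of_mem_suppX hx]
  exact div_self (by positivity)

end Estimators

section SamplingWeights

variable {m n : ℕ} {p : Fin (m + 1) → Fin (n + 1) → ℝ}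

lemma wX_eq_multinomialWeight {N : ℕ} (p : Fin (m + 1) → Fin (n + 1) → ℝ)
    (x : Fin (m + 1) → Fin (n + 1) → Fin (N + 1)) :
    wX p x = multinomialWeight (Function.uncurry p) (fun k => x k.1 k.2) := by
  simp [wX, multinomialWeight, Fintype.prod_prod_type]

lemma wX_nonneg {N : ℕ} (hp : ∀ i j, 0 ≤ p i j) (x : Fin (m + 1) → Fin (n + 1) → Fin (N + 1)) :
    0 ≤ wX p x :=
  (multinomialWeight_nonneg (q := Function.uncurry p) (fun k => hp k.1 k.2) _).trans_eq
    (wX_eq_multinomialWeight p x).symm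

lemma sum_suppX_wX (hp : Function.uncurry p ∈ stdSimplex ℝ (Fin (m + 1) × Fin (n + 1))) (N : ℕ) :
    ∑ x ∈ suppX m n N, wX p x = 1 := by
  rw [← sum_multinomialWeight_eq_one hp N, ← sum_fin_filter_eq_sum_piAntidiag]
  refine sum_equiv (Equiv.curry _ _ _).symm (fun x => ?_) fun x _ => wX_eq_multinomialWeight p x
  simp [suppX, Fintype.sum_prod_type]

lemma sum_suppY_wY_mul (p : Fin (m + 1) → Fin (n + 1) → ℝ) (N' : ℕ)
    (f : (Fin (m + 1) → ℕ) → ℝ) :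
    ∑ y ∈ suppY m N', wY p y * f (fun i => y i) =
      ∑ y ∈ piAntidiag univ N', multinomialWeight (rowSum p) y * f y :=
  sum_fin_filter_eq_sum_piAntidiag N' fun y => multinomialWeight (rowSum p) y * f y

lemma sum_suppY_wY (hp : Function.uncurry p ∈ stdSimplex ℝ (Fin (m + 1) × Fin (n + 1))) (N' : ℕ) :
    ∑ y ∈ suppY m N', wY p y = 1 := by
  simpa [sum_multinomialWeight_eq_one (rowSum_mem_stdSimplex hp)] using
    sum_suppY_wY_mul p N' fun _ => 1

end SamplingWeights

section AggregatedRisk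

variable {m n N : ℕ} {p : Fin (m + 1) → Fin (n + 1) → ℝ}

-- Given `X = x`, the row marginal of `p̂` smooths the counts `Y` with the pseudo-counts
-- `xᵢ + (1 + n) / 2`.
lemma sum_wY_mul_relEntropy_rowSum_phat_le
    (hp : Function.uncurry p ∈ stdSimplex ℝ (Fin (m + 1) × Fin (n + 1)))
    {x : Fin (m + 1) → Fin (n + 1) → Fin (N + 1)} (hx : x ∈ suppX m n N) (N' : ℕ) :
    ∑ y ∈ suppY m N', wY p y * relEntropy (rowSum p) (rowSum (phat x y)) ≤
      (N + (1 + m) * (1 + n) / 2 + m) / (N' + 1) := by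
  let b : Fin (m + 1) → ℝ := fun i => ((∑ j, (x i j : ℕ) : ℕ) : ℝ) + (1 + n) / 2
  have hb (i : Fin (m + 1)) : 1 / 2 ≤ b i := by
    have : (0 : ℝ) ≤ ((∑ j, (x i j : ℕ) : ℕ) : ℝ) := Nat.cast_nonneg _
    have : (0 : ℝ) ≤ n := n.cast_nonneg
    simp only [b]
    linarith
  have hsum : ∑ i, b i = N + (1 + m) * (1 + n) / 2 := sum_rowCount_add_of_mem_suppX hx
  have hsmooth (y : Fin (m + 1) → Fin (N' + 1)) :
      rowSum (phat x y) = fun i => (((y i : ℕ) : ℝ) + b i) / (N' + ∑ l, b l) := by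
    funext i
    rw [rowSum_phat, hsum]
    simp only [b]
    ring_nf
  simp only [hsmooth]
  rw [sum_suppY_wY_mul p N' fun y => relEntropy (rowSum p) fun i => (y i + b i) / (N' + ∑ l, b l)]
  have hbound :=
    sum_multinomialWeight_mul_relEntropy_smoothed_le (rowSum_mem_stdSimplex hp) N' hb
  refine hbound.trans_eq ?_
  rw [hsum, Fintype.card_fin]
  push_cast
  ring

/-- The expected entropy loss of the row marginal of `p̃`, as an estimator of the row marginal
of `p`. -/
noncomputable def directRowRisk (N : ℕ) (p : Fin (m + 1) → Fin (n + 1) → ℝ) : ℝ :=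
  ∑ x ∈ suppX m n N, wX p x * relEntropy (rowSum p) (rowSum (ptilde x))

lemma riskDiff_le (N N' : ℕ) (hpos : ∀ i j, 0 < p i j)
    (hp : Function.uncurry p ∈ stdSimplex ℝ (Fin (m + 1) × Fin (n + 1))) :
    riskDiff m n p N N' ≤ (N + (1 + m) * (1 + n) / 2 + m) / (N' + 1) - directRowRisk N p := by
  have hloss (x : Fin (m + 1) → Fin (n + 1) → Fin (N + 1)) (y : Fin (m + 1) → Fin (N' + 1)) :=
    entropyLoss_sub_entropyLoss (phat_pos x y) (ptilde_pos x) hpos (phat_mul_rowSum_ptilde x y)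
  calc riskDiff m n p N N'
      = ∑ x ∈ suppX m n N, wX p x *
          (∑ y ∈ suppY m N', wY p y * relEntropy (rowSum p) (rowSum (phat x y)) -
            relEntropy (rowSum p) (rowSum (ptilde x))) := by
        simp only [riskDiff, hloss, mul_assoc, ← mul_sum, mul_sub, sum_sub_distrib, ← sum_mul,
          sum_suppY_wY hp, one_mul]
    _ ≤ ∑ x ∈ suppX m n N, wX p x * ((N + (1 + m) * (1 + n) / 2 + m) / (N' + 1) -
          relEntropy (rowSum p) (rowSum (ptilde x))) :=
        sum_le_sum fun x hx => mul_le_mul_of_nonneg_left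
          (sub_le_sub_right (sum_wY_mul_relEntropy_rowSum_phat_le hp hx N') _)
          (wX_nonneg (fun i j => (hpos i j).le) x)
    _ = (N + (1 + m) * (1 + n) / 2 + m) / (N' + 1) - directRowRisk N p := by
        simp only [mul_sub, sum_sub_distrib, ← sum_mul, sum_suppX_wX hp, one_mul, directRowRisk]

end AggregatedRisk

section DirectRisk

variable {m n N : ℕ} {p : Fin (m + 1) → Fin (n + 1) → ℝ}

lemma continuous_directRowRisk :
    Continuous fun p : Fin (m + 1) → Fin (n + 1) → ℝ => directRowRisk N p := by
  refine continuous_finsetSum _ fun x _ => Continuous.mul ?_ ?_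
  · unfold wX
    fun_prop
  · exact (continuous_relEntropy_left (rowSum_pos (ptilde_pos x))).comp continuous_rowSum

/-- The outcome in which all `N` direct observations fall into the cell `(i, j)`. -/
def concentratedOutcome (N : ℕ) (i : Fin (m + 1)) (j : Fin (n + 1)) :
    Fin (m + 1) → Fin (n + 1) → Fin (N + 1) :=
  Pi.single i (Pi.single j (Fin.last N))

lemma sum_concentratedOutcome (i k : Fin (m + 1)) (j : Fin (n + 1)) :
    ∑ l, (concentratedOutcome N i j k l : ℕ) = if k = i then N else 0 := by
  obtain rfl | hk := eq_or_ne k i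
  · have hval (l : Fin (n + 1)) :
        ((Pi.single j (Fin.last N) : Fin (n + 1) → Fin (N + 1)) l : ℕ) =
          if l = j then N else 0 := by
      rw [Pi.single_apply]
      split_ifs <;> rfl
    simp [concentratedOutcome, hval]
  · simp [concentratedOutcome, hk]

lemma concentratedOutcome_mem_suppX (i : Fin (m + 1)) (j : Fin (n + 1)) :
    concentratedOutcome N i j ∈ suppX m n N := by
  simp [suppX, sum_concentratedOutcome]

lemma wX_concentratedOutcome_pos {i : Fin (m + 1)} {j : Fin (n + 1)} (hij : 0 < p i j) :
    0 < wX p (concentratedOutcome N i j) := by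
  refine mul_pos (Nat.cast_pos.mpr (Nat.multinomial_pos _ _))
    (prod_pos fun k _ => prod_pos fun l _ => ?_)
  obtain rfl | hk := eq_or_ne k i
  · obtain rfl | hl := eq_or_ne l j
    · exact pow_pos hij _
    · simp [concentratedOutcome, hl]
  · simp [concentratedOutcome, hk]

lemma rowSum_ptilde_concentratedOutcome_ne (hN : N ≠ 0) {i k : Fin (m + 1)} (hik : i ≠ k)
    (j l : Fin (n + 1)) :
    rowSum (ptilde (concentratedOutcome N i j)) ≠ rowSum (ptilde (concentratedOutcome N k l)) := by
  intro heq
  have hrow := congrFun heq i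
  have hden : (N + (1 + m) * (1 + n) / 2 : ℝ) ≠ 0 := by positivity
  simp only [rowSum_ptilde, sum_concentratedOutcome, if_true, if_neg hik,
    div_left_inj' hden] at hrow
  simp [hN] at hrow

-- If `p̃` recovers the row marginal from the outcome concentrated in one row, then all rows have
-- positive probability, and `p̃` misses it on the outcome concentrated in any other row.
lemma exists_wX_pos_rowSum_ptilde_ne (hm : 1 ≤ m) (hN : 1 ≤ N)
    (hp : rowSum p ∈ stdSimplex ℝ (Fin (m + 1))) :
    ∃ x ∈ suppX m n N, 0 < wX p x ∧ rowSum p ≠ rowSum (ptilde x) := by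
  obtain ⟨i, -, hi⟩ : ∃ i ∈ univ, 0 < rowSum p i :=
    exists_lt_of_sum_lt (by simp [hp.2])
  obtain ⟨j, hij⟩ := exists_pos_of_rowSum_pos hi
  by_cases heq : rowSum p = rowSum (ptilde (concentratedOutcome N i j))
  · have : Nontrivial (Fin (m + 1)) := Fin.nontrivial_iff_two_le.mpr (by omega)
    obtain ⟨k, hki⟩ := exists_ne i
    obtain ⟨l, hkl⟩ := exists_pos_of_rowSum_pos (p := p) (i := k)
      (heq ▸ rowSum_pos (ptilde_pos _) k)
    exact ⟨_, concentratedOutcome_mem_suppX k l, wX_concentratedOutcome_pos hkl,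
      heq ▸ rowSum_ptilde_concentratedOutcome_ne (by omega) hki.symm j l⟩
  · exact ⟨_, concentratedOutcome_mem_suppX i j, wX_concentratedOutcome_pos hij, heq⟩

lemma directRowRisk_pos (hm : 1 ≤ m) (hN : 1 ≤ N)
    (hp : Function.uncurry p ∈ stdSimplex ℝ (Fin (m + 1) × Fin (n + 1))) :
    0 < directRowRisk N p := by
  have hq := rowSum_mem_stdSimplex hp
  have hsum {x} (hx : x ∈ suppX m n N) : ∑ i, rowSum p i = ∑ i, rowSum (ptilde x) i :=
    hq.2.trans (sum_rowSum_ptilde hx).symm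
  obtain ⟨x, hx, hwx, hne⟩ := exists_wX_pos_rowSum_ptilde_ne hm hN hq
  refine sum_pos' (fun x hx => mul_nonneg (wX_nonneg (fun i j => hp.1 (i, j)) x) ?_)
    ⟨x, hx, mul_pos hwx ?_⟩
  · exact relEntropy_nonneg hq.1 (rowSum_pos (ptilde_pos x)) (hsum hx)
  · exact relEntropy_pos hq.1 (rowSum_pos (ptilde_pos x)) (hsum hx) hne

lemma exists_pos_forall_le_directRowRisk (n : ℕ) (hm : 1 ≤ m) (hN : 1 ≤ N) :
    ∃ c > 0, ∀ p : Fin (m + 1) → Fin (n + 1) → ℝ,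
      Function.uncurry p ∈ stdSimplex ℝ (Fin (m + 1) × Fin (n + 1)) → c ≤ directRowRisk N p := by
  have hcont : Continuous fun P : Fin (m + 1) × Fin (n + 1) → ℝ =>
      directRowRisk N (Function.curry P) :=
    continuous_directRowRisk.comp (by unfold Function.curry; fun_prop)
  obtain ⟨P, hP, hmin⟩ := (isCompact_stdSimplex ℝ (Fin (m + 1) × Fin (n + 1))).exists_isMinOn
    ⟨_, single_mem_stdSimplex ℝ 0⟩ hcont.continuousOn
  exact ⟨directRowRisk N (Function.curry P), directRowRisk_pos (p := Function.curry P) hm hN hP,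
    fun p hp => isMinOn_iff.mp hmin (Function.uncurry p) hp⟩

end DirectRisk

theorem dominance_large_aggregated_sample_general (m n N : ℕ) (hm : 1 ≤ m) (hN : 1 ≤ N) :
    ∃ N'₀ : ℕ, ∀ N' : ℕ, N'₀ ≤ N' →
      ∀ p : Fin (m + 1) → Fin (n + 1) → ℝ, (∀ i j, 0 < p i j) →
        ∑ i, ∑ j, p i j = 1 → riskDiff m n p N N' < 0 := by
  obtain ⟨c, hc, hrisk⟩ := exists_pos_forall_le_directRowRisk n hm hN
  obtain ⟨N'₀, hN'₀⟩ := exists_nat_gt ((N + (1 + m) * (1 + n) / 2 + m) / c)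
  refine ⟨N'₀, fun N' hN' p hpos hsum => ?_⟩
  have hp : Function.uncurry p ∈ stdSimplex ℝ (Fin (m + 1) × Fin (n + 1)) :=
    ⟨fun k => (hpos k.1 k.2).le, by simpa [Fintype.sum_prod_type] using hsum⟩
  have hsmall : (N + (1 + m) * (1 + n) / 2 + m) / (N' + 1) < c := by
    have hlarge : (N'₀ : ℝ) < N' + 1 := by exact_mod_cast Nat.lt_succ_of_le hN'
    exact (div_lt_comm₀ (by positivity) hc).mpr (hN'₀.trans hlarge)
  linarith [riskDiff_le N N' hpos hp, hrisk p hp]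

theorem dominance_large_aggregated_sample (m n N : ℕ)
    (hm : 1 ≤ m) (hn : 3 ≤ n) (hN : 1 ≤ N) :
    ∃ N'₀ : ℕ, ∀ N' : ℕ, N'₀ ≤ N' →
      ∀ p : Fin (m+1) → Fin (n+1) → ℝ, (∀ i j, 0 < p i j) →
        ∑ i, ∑ j, p i j = 1 → riskDiff m n p N N' < 0 := by
  exact dominance_large_aggregated_sample_general m n N hm hN
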